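/- Let C be a category possessing all pushouts. Then for every n ≥ 1 and every 0 ≤ k ≤ n, every functor ChΛ(n,k) → C extends along the inclusion to a functor Ch(n) → C. (Equivalently, C has the right lifting property against all inclusions c Sd² Λ^k[n] → c Sd² Δ[n], i.e., Ex² N C is a Kan complex and C is fibrant in the Thomason model structure; this is the instance of the Main Theorem for the partial model category (C, C) with fibrations the identities and cofibrations all morphisms.) -/

import Mathlib

/-!
The subdivided horn `ChLam n k` is a sieve in `Chain2 n`, so a functor on it extends as soon as it
admits a cocone: the new chains are all sent to the apex (`exists_extension_of_cocone`).

To find a cocone on `F : ChLam n k ⥤ C`, let `Q` be the poset of proper subsets `w` of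
`{0, …, n}` containing `k`, and for `w ∈ Q` let `D w` be the poset of chains of nonempty subsets
of `w`. If every `F|_{D w}` has a colimit, these colimits form a functor on `Q`, and a cocone on
this functor yields a cocone on `F`, because a chain `A` lies in `D w` for `w = ⋃ A ∪ {k}`
(`nonempty_cocone_of_cover`).

The required colimits and cocone come from one fact: a category with pushouts has colimits of all
diagrams indexed by a finite poset with a least element (`hasColimit_of_orderBot`), since such a
diagram lives under its value at `⊥`, and an under category has an initial object and pushouts,
hence all finite colimits. It applies to `Q`, whose least element is `{k}`, and to the chains in
`D w` having `w` as an entry, whose least element is `{w}`. The latter are final in `D w` because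
`A ↦ A ∪ {w}` is left adjoint to their inclusion.
-/

open CategoryTheory

/-- `Chain2 n` is the poset of nonempty chains of nonempty subsets of `{0, …, n}`
(a chain being recorded as its finite set of entries, totally ordered by inclusion),
ordered by containment of the sets of entries; this is `c Sd² Δ[n]`. -/
abbrev Chain2 (n : ℕ) :=
  {A : Finset (Finset (Fin (n+1))) //
    A.Nonempty ∧ (∀ s ∈ A, s.Nonempty) ∧
      IsChain (· ⊆ ·) (A : Set (Finset (Fin (n+1))))}

/-- `ChLam n k` is the full subposet of `Chain2 n` consisting of chains none of whose
entries equals `{0, …, n}` or `{0, …, n} \ {k}`; this is `c Sd² Λ^k[n]`. -/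
abbrev ChLam (n : ℕ) (k : Fin (n+1)) :=
  {A : Chain2 n // ∀ s ∈ A.1, s ≠ Finset.univ ∧ s ≠ Finset.univ \ {k}}

/-- The inclusion of the doubly subdivided horn into the doubly subdivided simplex. -/
def chLamIncl (n : ℕ) (k : Fin (n+1)) : ChLam n k ⥤ Chain2 n :=
  Monotone.functor (f := fun x => x.1) (fun _ _ h => h)

open CategoryTheory.Limits

section General

variable {C : Type*} [Category C]

/-- The inclusion of the subposet cut out by a predicate, as a functor. -/
abbrev inclSub {P : Type} [Preorder P] (p : P → Prop) : {x // p x} ⥤ P :=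
  Monotone.functor (f := Subtype.val) (fun _ _ h => h)

theorem hasColimit_of_orderBot [HasPushouts C] {P : Type} [PartialOrder P] [OrderBot P]
    [Finite P] (F : P ⥤ C) : HasColimit F := by
  have := Fintype.ofFinite P
  have hbot : IsInitial (⊥ : P) := IsInitial.ofUnique (h := fun _ => ⟨⟨homOfLE bot_le⟩,
    fun _ => Subsingleton.elim _ _⟩) _
  have : HasFiniteColimits (Under (F.obj ⊥)) := hasFiniteColimits_of_hasInitial_and_pushouts
  have : IsConnected P := isConnected_of_isInitial P hbot
  let lifted : P ⥤ Under (F.obj ⊥) := Under.lift F (coneOfDiagramInitial hbot F).π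
  exact ⟨⟨_, isColimitOfPreserves (Under.forget _) (colimit.isColimit lifted)⟩⟩

/-- A category with pushouts has the colimit of `F : P ⥤ C` when the closed elements of some
closure operator `c` on the finite poset `P` (those satisfying `p`) have a least element. -/
theorem hasColimit_of_closure [HasPushouts C] {P : Type} [PartialOrder P] [Finite P]
    (p : P → Prop) (c : P → P) (hc : ∀ x, p (c x)) (hle : ∀ x y, p y → (c x ≤ y ↔ x ≤ y))
    (b : P) (hb : p b) (hbot : ∀ y, p y → b ≤ y) (F : P ⥤ C) : HasColimit F := by
  let _ : OrderBot {x // p x} := { bot := ⟨b, hb⟩, bot_le := fun y => hbot y.1 y.2 }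
  have gc : GaloisConnection (fun x : P => (⟨c x, hc x⟩ : {x // p x})) Subtype.val :=
    fun x y => hle x y.1 y.2
  have : (gc.monotone_u.functor).Final := Functor.final_of_adjunction gc.adjunction
  have := hasColimit_of_orderBot (gc.monotone_u.functor ⋙ F)
  exact Functor.Final.hasColimit_of_comp gc.monotone_u.functor

/-- A monotone family of subposets `D w` of `P` indexed by `w : Q`, on each of which `F` has a
colimit, reduces cocones on `F` to cocones on functors on `Q`, provided that a monotone map `m`
selects for each element of `P` a member of the family containing it. -/
theorem nonempty_cocone_of_cover {P Q : Type} [PartialOrder P] [PartialOrder Q]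
    (D : Q → P → Prop) (hD : ∀ {w w' : Q}, w ≤ w' → ∀ x, D w x → D w' x)
    (m : P → Q) (hm : Monotone m) (hmD : ∀ x, D (m x) x) (F : P ⥤ C)
    [∀ w, HasColimit (inclSub (D w) ⋙ F)] (hQ : ∀ H : Q ⥤ C, Nonempty (Cocone H)) :
    Nonempty (Cocone F) := by
  -- The coprojections, typed as morphisms out of the values of `F` itself.
  let κ (w : Q) (x : P) (hx : D w x) : F.obj x ⟶ colimit (inclSub (D w) ⋙ F) :=
    colimit.ι (inclSub (D w) ⋙ F) ⟨x, hx⟩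
  have hκ : ∀ (w : Q) (x y : P) (f : x ⟶ y) (hx : D w x) (hy : D w y),
      F.map f ≫ κ w y hy = κ w x hx := fun w x y f hx hy =>
    colimit.w (inclSub (D w) ⋙ F) (j := ⟨y, hy⟩) (j' := ⟨x, hx⟩) (homOfLE (leOfHom f))
  let δ (w w' : Q) (h : w ≤ w') :
      colimit (inclSub (D w) ⋙ F) ⟶ colimit (inclSub (D w') ⋙ F) :=
    colimit.desc (inclSub (D w) ⋙ F)
      { pt := colimit (inclSub (D w') ⋙ F)
        ι :=
          { app := fun x => κ w' x.1 (hD h x.1 x.2)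
            naturality := fun x y g =>
              (hκ w' x.1 y.1 (homOfLE (leOfHom g)) _ _).trans (Category.comp_id _).symm } }
  have hδ : ∀ (w w' : Q) (h : w ≤ w') (x : P) (hx : D w x),
      κ w x hx ≫ δ w w' h = κ w' x (hD h x hx) := fun w w' h x hx => colimit.ι_desc _ _
  have hext : ∀ (w : Q) (Z : C) (a b : colimit (inclSub (D w) ⋙ F) ⟶ Z),
      (∀ x hx, κ w x hx ≫ a = κ w x hx ≫ b) → a = b := fun w Z a b h =>
    colimit.hom_ext fun x => h x.1 x.2
  -- The left Kan extension, with value at `w` the colimit of `F` over `D w`.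
  let H : Q ⥤ C :=
    { obj := fun w => colimit (inclSub (D w) ⋙ F)
      map := fun f => δ _ _ (leOfHom f)
      map_id := fun w => hext _ _ _ _ fun x hx => by
        rw [hδ _ _ le_rfl, Category.comp_id]
      map_comp := fun f g => hext _ _ _ _ fun x hx => by
        rw [hδ _ _ (leOfHom (f ≫ g)), ← Category.assoc, hδ _ _ (leOfHom f), hδ _ _ (leOfHom g)] }
  obtain ⟨c⟩ := hQ H
  let φ (x : P) : F.obj x ⟶ c.pt := κ (m x) x (hmD x) ≫ c.ι.app (m x)
  refine ⟨{ pt := c.pt, ι := { app := φ, naturality := ?_ } }⟩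
  intro x y f
  have hxy := hm (leOfHom f)
  have h1 : δ _ _ hxy ≫ c.ι.app (m y) = c.ι.app (m x) := c.w (homOfLE hxy)
  have h2 : F.map f ≫ φ y = φ x := by
    change F.map f ≫ κ (m y) y (hmD y) ≫ c.ι.app (m y) = κ (m x) x (hmD x) ≫ c.ι.app (m x)
    rw [← h1, ← Category.assoc, hκ _ _ _ f (hD hxy x (hmD x)), ← Category.assoc,
      hδ _ _ hxy]
  exact h2.trans (Category.comp_id _).symm

/-- A functor on a sieve of a poset extends to the whole poset as soon as it has a cocone. The
extension is written as a composite through the category obtained from the sieve by adjoining a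
terminal object. -/
theorem exists_extension_of_cocone {P : Type} [PartialOrder P] (p : P → Prop)
    (hp : ∀ x y, x ≤ y → p y → p x) (F : {x // p x} ⥤ C) (c : Cocone F) :
    ∃ G : P ⥤ C, inclSub p ⋙ G = F := by
  classical
  have hthin : ∀ X Y : WithTerminal {x // p x}, Subsingleton (X ⟶ Y) := by
    rintro (X | _) (Y | _)
    · exact inferInstanceAs (Subsingleton (X ⟶ Y))
    · exact inferInstanceAs (Subsingleton PUnit)
    · exact inferInstanceAs (Subsingleton PEmpty)
    · exact inferInstanceAs (Subsingleton PUnit)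
  let o : P → WithTerminal {x // p x} := fun x =>
    if h : p x then WithTerminal.of ⟨x, h⟩ else WithTerminal.star
  have ho : ∀ x y, x ≤ y → Nonempty (o x ⟶ o y) := by
    intro x y hxy
    by_cases hy : p y
    · have hx := hp x y hxy hy
      simp only [o, dif_pos hx, dif_pos hy]
      exact ⟨(WithTerminal.incl (C := {x // p x})).map (X := ⟨x, hx⟩) (Y := ⟨y, hy⟩) (homOfLE hxy)⟩
    · simp only [o, dif_neg hy]
      exact ⟨WithTerminal.starTerminal.from _⟩
  let K : P ⥤ WithTerminal {x // p x} :=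
    { obj := o
      map := fun f => (ho _ _ (leOfHom f)).some
      map_id := fun _ => (hthin _ _).elim _ _
      map_comp := fun _ _ => (hthin _ _).elim _ _ }
  have hobj : ∀ x : {x // p x}, o x.1 = WithTerminal.of x := fun x => by
    simp only [o, dif_pos x.2]
  have hK : inclSub p ⋙ K = WithTerminal.incl (C := {x // p x}) :=
    CategoryTheory.Functor.ext hobj (fun _ _ _ => (hthin _ _).elim _ _)
  refine ⟨K ⋙ WithTerminal.lift F c.ι.app (fun x y f => c.w f), ?_⟩
  rw [← Functor.assoc, hK]
  rfl

end General

/-- A chain in the horn, together with `k`, never covers `{0, …, n}`: its union is its largest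
entry, which is neither everything nor the face opposite `k`. -/
theorem insert_sup_ne_univ {n : ℕ} {k : Fin (n+1)} (A : ChLam n k) :
    insert k (A.1.1.sup id) ≠ Finset.univ := by
  intro h
  have hmem : A.1.1.sup id ∈ A.1.1 := by
    rw [← Finset.sup'_eq_sup A.1.2.1]
    refine Finset.sup'_mem (A.1.1 : Set (Finset (Fin (n+1)))) ?_ _ _ _ fun s hs => hs
    intro s hs t ht
    rcases A.1.2.2.2.total hs ht with h | h
    · rwa [sup_eq_right.2 h]
    · rwa [sup_eq_left.2 h]
  obtain ⟨h1, h2⟩ := A.2 _ hmem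
  by_cases hk : k ∈ A.1.1.sup id
  · exact h1 (by rwa [Finset.insert_eq_of_mem hk] at h)
  · apply h2
    ext i
    have hi : i ∈ insert k (A.1.1.sup id) := by rw [h]; exact Finset.mem_univ i
    grind

/-- Adjoining to a chain in the horn an upper bound `w` of its entries, where `w` is a proper
subset containing `k`. -/
def insertTop {n : ℕ} {k : Fin (n+1)} (w : Finset (Fin (n+1))) (hk : k ∈ w)
    (hw : w ≠ Finset.univ) (A : ChLam n k) (hA : ∀ s ∈ A.1.1, s ⊆ w) : ChLam n k :=
  ⟨⟨insert w A.1.1, Finset.insert_nonempty _ _, by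
      intro s hs
      rcases Finset.mem_insert.1 hs with rfl | hs
      · exact ⟨k, hk⟩
      · exact A.1.2.2.1 s hs, by
      rw [Finset.coe_insert]
      exact A.1.2.2.2.insert fun s hs _ => Or.inr (hA s hs)⟩, by
    intro s hs
    rcases Finset.mem_insert.1 hs with rfl | hs
    · refine ⟨hw, ?_⟩
      rintro rfl
      simp at hk
    · exact A.2 s hs⟩

/-- The one-entry chain at a proper subset `w` containing `k`. -/
def singletonChain {n : ℕ} {k : Fin (n+1)} (w : Finset (Fin (n+1))) (hk : k ∈ w)
    (hw : w ≠ Finset.univ) : ChLam n k :=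
  ⟨⟨{w}, Finset.singleton_nonempty _, by
      intro s hs
      rw [Finset.mem_singleton.1 hs]
      exact ⟨k, hk⟩, by simp⟩, by
    intro s hs
    rw [Finset.mem_singleton.1 hs]
    refine ⟨hw, ?_⟩
    rintro rfl
    simp at hk⟩

theorem nonempty_cocone_chLam {C : Type*} [Category C] [HasPushouts C] (n : ℕ) (hn : 1 ≤ n)
    (k : Fin (n+1)) (F : ChLam n k ⥤ C) : Nonempty (Cocone F) := by
  let Q := {w : Finset (Fin (n+1)) // k ∈ w ∧ w ≠ Finset.univ}
  let D : Q → ChLam n k → Prop := fun w A => ∀ s ∈ A.1.1, s ⊆ w.1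
  have hcol : ∀ w, HasColimit (inclSub (D w) ⋙ F) := by
    intro w
    refine hasColimit_of_closure (P := {A // D w A}) (fun A => w.1 ∈ A.1.1.1)
      (fun A => ⟨insertTop w.1 w.2.1 w.2.2 A.1 A.2, ?_⟩) ?_ ?_
      ⟨singletonChain w.1 w.2.1 w.2.2, ?_⟩ ?_ ?_ _
    · intro s hs
      rcases Finset.mem_insert.1 hs with rfl | hs
      · exact subset_rfl
      · exact A.2 s hs
    · intro A
      exact Finset.mem_insert_self _ _
    · intro A B hB
      change insert w.1 A.1.1.1 ⊆ B.1.1.1 ↔ A.1.1.1 ⊆ B.1.1.1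
      rw [Finset.insert_subset_iff]
      exact and_iff_right hB
    · intro s hs
      rw [Finset.mem_singleton.1 hs]
    · exact Finset.mem_singleton_self _
    · intro B hB
      exact Finset.singleton_subset_iff.2 hB
  have hk : ({k} : Finset (Fin (n+1))) ≠ Finset.univ := by
    intro h
    have := congrArg Finset.card h
    simp at this
    omega
  let _ : OrderBot Q :=
    { bot := ⟨{k}, Finset.mem_singleton_self _, hk⟩
      bot_le := fun w => Finset.singleton_subset_iff.2 w.2.1 }
  refine nonempty_cocone_of_cover D (fun h A hA s hs => (hA s hs).trans h)
    (fun A => ⟨insert k (A.1.1.sup id), Finset.mem_insert_self _ _, insert_sup_ne_univ A⟩)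
    (fun A B h => Finset.insert_subset_insert _ (Finset.sup_mono h)) ?_ F ?_
  · intro A s hs
    exact (Finset.le_sup (f := id) hs).trans (Finset.subset_insert _ _)
  · intro H
    have := hasColimit_of_orderBot H
    exact ⟨colimit.cocone H⟩

/-- A category with all pushouts has the extension property against all doubly
subdivided horn inclusions `c Sd² Λ^k[n] → c Sd² Δ[n]`; i.e. `Ex² N C` is a Kan complex,
so `C` is fibrant in the Thomason model structure. -/
theorem thomason_fibrant_of_hasPullbacks (C : Type*) [Category C]
    [Limits.HasPushouts C] :
    ∀ (n : ℕ), 1 ≤ n → ∀ (k : Fin (n+1)) (F : ChLam n k ⥤ C),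
      ∃ G : Chain2 n ⥤ C, chLamIncl n k ⋙ G = F := by
  intro n hn k F
  obtain ⟨c⟩ := nonempty_cocone_chLam n hn k F
  exact exists_extension_of_cocone _ (fun A B h hB s hs => hB s (h hs)) F c
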